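/- Let R be a commutative ring. Every admissibly Ind-projective R-module is flat and Mittag-Leffler. (Module-level content of Proposition 3.30: Indᵃ(P_f(R)) embeds as a full subcategory of the category of flat Mittag-Leffler R-modules.) -/

import Mathlib

universe u

open TensorProduct DirectSum

/-- The canonical map `M ⊗[R] (∏ i, Q i) →ₗ[R] ∏ i, (M ⊗[R] Q i)`,
determined by `m ⊗ (q_i)_i ↦ (m ⊗ q_i)_i`. -/
noncomputable def tensorPiMap (R : Type u) [CommRing R] (M : Type u) [AddCommGroup M]
    [Module R M] {ι : Type u} (Q : ι → Type u) [∀ i, AddCommGroup (Q i)]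
    [∀ i, Module R (Q i)] :
    (M ⊗[R] (∀ i, Q i)) →ₗ[R] ∀ i, M ⊗[R] Q i :=
  LinearMap.pi fun i => LinearMap.lTensor M (LinearMap.proj i)

/-- An `R`-module `M` is Mittag-Leffler if for every family `(Q i)` of `R`-modules the
canonical map `M ⊗[R] (∏ i, Q i) → ∏ i, (M ⊗[R] Q i)` is injective. -/
def IsMittagLeffler (R : Type u) [CommRing R] (M : Type u) [AddCommGroup M]
    [Module R M] : Prop :=
  ∀ (ι : Type u) (Q : ι → Type u) [∀ i, AddCommGroup (Q i)] [∀ i, Module R (Q i)],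
    Function.Injective (tensorPiMap R M Q)

/-- An `R`-module is flat Mittag-Leffler if it is flat and Mittag-Leffler. -/
def IsFlatMittagLeffler (R : Type u) [CommRing R] (M : Type u) [AddCommGroup M]
    [Module R M] : Prop :=
  Module.Flat R M ∧ IsMittagLeffler R M


/-- A presentation of `M` as an admissible Ind-object of the category of finitely
generated projective `R`-modules: a directed poset `I` and a monotone family of
submodules `P i ⊆ M` with union `M`, each finitely generated projective, such that
each inclusion `P i ⊆ P j` (for `i ≤ j`) admits an `R`-linear retraction. -/
structure AdmissibleIndPresentation (R : Type u) [Ring R] (M : Type u) [AddCommGroup M]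
    [Module R M] : Type (u + 1) where
  I : Type u
  [ord : PartialOrder I]
  directed : IsDirected I (· ≤ ·)
  P : I → Submodule R M
  mono : Monotone P
  covers : ∀ x : M, ∃ i, x ∈ P i
  fg : ∀ i, (P i).FG
  proj : ∀ i, Module.Projective R (P i)
  splits : ∀ i j, (h : i ≤ j) →
    ∃ r : (P j) →ₗ[R] (P i), ∀ v : P i, r (Submodule.inclusion (mono h) v) = v

/-- `M` is admissibly Ind-projective if it admits a presentation as an admissible
Ind-object of finitely generated projective modules. -/
def IsAdmissiblyIndProjective (R : Type u) [Ring R] (M : Type u) [AddCommGroup M]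
    [Module R M] : Prop :=
  Nonempty (AdmissibleIndPresentation R M)

/-!
Both conclusions can be tested on finitely many elements of `M`, that is, inside a single member
`P i` of the directed union. A linear relation in `M` already holds in some `P i`, which is flat,
so it is trivial by the equational criterion. An element of the kernel of `M ⊗ ∏ Q → ∏ (M ⊗ Q)`
comes from some `P i ⊗ ∏ Q`. Since `P i` is universally injective in every larger `P j`, it is so in
`M`, hence the preimage already dies in `∏ (P i ⊗ Q)`; it is zero because `P i` is Mittag-Leffler.
A projective module is Mittag-Leffler as a retract of a free one, and for a free module the map in
question is the inclusion of `κ →₀ ∏ Q` into `∏ (κ →₀ Q)`.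
-/

theorem exists_le_of_fg_of_directed {R : Type*} [Semiring R] {M : Type*} [AddCommMonoid M]
    [Module R M] {I : Type*} {P : I → Submodule R M} (directed : Directed (· ≤ ·) P)
    (covers : ∀ x, ∃ i, x ∈ P i) {F : Submodule R M} (hF : F.FG) : ∃ i, F ≤ P i := by
  obtain ⟨i₀, -⟩ := covers 0
  have hF_le : F ≤ sSup (Set.range P) := fun x _ => by
    obtain ⟨i, hi⟩ := covers x
    exact (le_sSup (Set.mem_range_self i) : P i ≤ _) hi
  obtain ⟨_, ⟨i, rfl⟩, hi⟩ := (Submodule.fg_iff_compact F).1 hF (Set.range P) _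
    ⟨P i₀, i₀, rfl⟩ directed.directedOn_range (isLUB_sSup _) hF_le
  exact ⟨i, hi⟩

section UniversallyInjective

open LinearMap Submodule

/-- A linear map is universally injective if it stays injective after tensoring with any module;
for the inclusion of a submodule this is purity. The test modules range over the universe `w`. -/
def IsUniversallyInjective.{w, v₁, v₂, v₃} {R : Type v₁} [CommSemiring R] {M : Type v₂}
    [AddCommMonoid M] [Module R M] {N : Type v₃} [AddCommMonoid N] [Module R N]
    (f : M →ₗ[R] N) : Prop :=
  ∀ (Q : Type w) [AddCommMonoid Q] [Module R Q], Function.Injective (f.rTensor Q)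

universe w

variable {R : Type*} [CommSemiring R] {M : Type*} [AddCommMonoid M] [Module R M]

theorem IsUniversallyInjective.of_comp_eq_id {N : Type*} [AddCommMonoid N] [Module R N]
    {f : M →ₗ[R] N} {r : N →ₗ[R] M} (h : r ∘ₗ f = .id) : IsUniversallyInjective.{w} f :=
  fun Q _ _ => Function.LeftInverse.injective (g := r.rTensor Q) fun x => by
    rw [← rTensor_comp_apply, h, rTensor_id_apply]

theorem isUniversallyInjective_subtype_of_forall_fg_exists_le {N : Submodule R M}
    (h : ∀ F : Submodule R M, F.FG → ∃ L, F ≤ L ∧ ∃ hNL : N ≤ L,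
      IsUniversallyInjective.{w} (inclusion hNL)) :
    IsUniversallyInjective.{w} N.subtype := by
  intro Q _ _ x y hxy
  obtain ⟨N', hN', _, hrange⟩ :=
    exists_fg_le_subset_range_rTensor_inclusion {x, y} (Set.toFinite _)
  obtain ⟨x', rfl⟩ := hrange (.inl rfl)
  obtain ⟨y', rfl⟩ := hrange (.inr rfl)
  simp_rw [← rTensor_comp_apply, subtype_comp_inclusion] at hxy
  obtain ⟨F, _, hF, hF_eq⟩ := TensorProduct.eq_of_fg_of_subtype_eq hN' hxy
  obtain ⟨L, hFL, hNL, hL⟩ := h F hF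
  apply hL Q
  simpa only [← rTensor_comp_apply] using! congrArg (rTensor Q (inclusion hFL)) hF_eq

end UniversallyInjective

theorem flat_of_forall_fg_exists_le {R : Type*} [CommRing R] {M : Type*} [AddCommGroup M]
    [Module R M]
    (h : ∀ F : Submodule R M, F.FG → ∃ L, F ≤ L ∧ Module.Flat R L) : Module.Flat R M := by
  refine Module.Flat.of_forall_isTrivialRelation fun {l f x} hfx => ?_
  obtain ⟨L, hL, _⟩ :=
    h (Submodule.span R (Set.range x)) (Submodule.fg_span (Set.finite_range x))
  let x' : Fin l → L := fun i => ⟨x i, hL (Submodule.subset_span ⟨i, rfl⟩)⟩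
  have hfx' : ∑ i, f i • x' i = 0 := Subtype.ext (by simpa [x'] using hfx)
  obtain ⟨k, a, y, hxy, ha⟩ := Module.Flat.isTrivialRelation_of_sum_smul_eq_zero hfx'
  exact ⟨k, a, fun j => y j, fun i => by simpa [x'] using congrArg L.subtype (hxy i), ha⟩

section MittagLeffler

open LinearMap Submodule

variable {R : Type u} [CommRing R] {M N : Type u} [AddCommGroup M] [Module R M]
  [AddCommGroup N] [Module R N]

theorem tensorPiMap_rTensor {ι : Type u} {Q : ι → Type u} [∀ i, AddCommGroup (Q i)]
    [∀ i, Module R (Q i)] (f : M →ₗ[R] N) (x : M ⊗[R] ∀ i, Q i) :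
    tensorPiMap R N Q (f.rTensor _ x) = fun i => f.rTensor (Q i) (tensorPiMap R M Q x i) := by
  funext i
  simp only [tensorPiMap, pi_apply, ← comp_apply, lTensor_comp_rTensor, rTensor_comp_lTensor]

theorem finsuppScalarLeft_tensorPiMap {κ ι : Type u} [DecidableEq κ] {Q : ι → Type u}
    [∀ i, AddCommGroup (Q i)] [∀ i, Module R (Q i)] (x : (κ →₀ R) ⊗[R] ∀ i, Q i) (i : ι) (k : κ) :
    finsuppScalarLeft R (Q i) κ (tensorPiMap R (κ →₀ R) Q x i) k =
      finsuppScalarLeft R (∀ i, Q i) κ x k i := by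
  induction x with
  | zero => simp
  | tmul p q => simp [tensorPiMap]
  | add x y hx hy => simp [hx, hy]

namespace IsMittagLeffler

theorem finsupp (κ : Type u) : IsMittagLeffler R (κ →₀ R) := by
  classical
  intro ι Q _ _ x y hxy
  apply (finsuppScalarLeft R (∀ i, Q i) κ).injective
  ext k i
  rw [← finsuppScalarLeft_tensorPiMap, hxy, finsuppScalarLeft_tensorPiMap]

theorem of_isUniversallyInjective {f : M →ₗ[R] N} (hf : IsUniversallyInjective.{u} f)
    (hN : IsMittagLeffler R N) : IsMittagLeffler R M := by
  intro ι Q _ _ x y hxy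
  apply hf
  apply hN
  rw [tensorPiMap_rTensor, hxy, tensorPiMap_rTensor]

theorem of_projective [Module.Projective R M] : IsMittagLeffler R M :=
  have ⟨_, hs⟩ := Module.projective_def'.1 ‹Module.Projective R M›
  (finsupp M).of_isUniversallyInjective (.of_comp_eq_id hs)

theorem of_forall_fg_exists_le
    (h : ∀ F : Submodule R M, F.FG →
      ∃ L, F ≤ L ∧ IsUniversallyInjective.{u} L.subtype ∧ IsMittagLeffler R L) :
    IsMittagLeffler R M := by
  intro ι Q _ _
  rw [injective_iff_map_eq_zero]
  intro x hx
  obtain ⟨F, hF, y, rfl⟩ := exists_fg_le_eq_rTensor_subtype x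
  obtain ⟨L, hFL, hL_pure, hL⟩ := h F hF
  rw [← subtype_comp_inclusion F L hFL, rTensor_comp_apply] at hx ⊢
  have hL_zero : tensorPiMap R L Q (rTensor _ (inclusion hFL) y) = 0 := by
    funext i
    apply hL_pure
    simpa only [tensorPiMap_rTensor, Pi.zero_apply, map_zero] using congrFun hx i
  rw [(injective_iff_map_eq_zero _).1 (hL ι Q) _ hL_zero, map_zero]

end IsMittagLeffler

end MittagLeffler

theorem isFlatMittagLeffler_of_isAdmissiblyIndProjective_general
    {R : Type u} [CommRing R] {M : Type u} [AddCommGroup M] [Module R M]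
    {I : Type*} [Preorder I] [IsDirectedOrder I] {P : I → Submodule R M} (mono : Monotone P)
    (covers : ∀ x, ∃ i, x ∈ P i) (flatMittagLeffler : ∀ i, IsFlatMittagLeffler R (P i))
    (pure : ∀ i j (hij : i ≤ j),
      IsUniversallyInjective.{u} (Submodule.inclusion (mono hij))) :
    IsFlatMittagLeffler R M := by
  have exists_le {F : Submodule R M} (hF : F.FG) : ∃ i, F ≤ P i :=
    exists_le_of_fg_of_directed mono.directed_le covers hF
  have pure_subtype (i : I) : IsUniversallyInjective.{u} (P i).subtype := by
    refine isUniversallyInjective_subtype_of_forall_fg_exists_le fun F hF => ?_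
    obtain ⟨j, hj⟩ := exists_le hF
    obtain ⟨k, hik, hjk⟩ := exists_ge_ge i j
    exact ⟨P k, hj.trans (mono hjk), mono hik, pure i k hik⟩
  constructor
  · refine flat_of_forall_fg_exists_le fun F hF => ?_
    obtain ⟨i, hi⟩ := exists_le hF
    exact ⟨P i, hi, (flatMittagLeffler i).1⟩
  · refine .of_forall_fg_exists_le fun F hF => ?_
    obtain ⟨i, hi⟩ := exists_le hF
    exact ⟨P i, hi, pure_subtype i, (flatMittagLeffler i).2⟩

/-- **Proposition 3.30 (module level)**: every admissibly Ind-projective `R`-module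
is flat and Mittag-Leffler. -/
theorem isFlatMittagLeffler_of_isAdmissiblyIndProjective
    (R : Type u) [CommRing R] (M : Type u) [AddCommGroup M] [Module R M]
    (hM : IsAdmissiblyIndProjective R M) :
    Module.Flat R M ∧ IsMittagLeffler R M := by
  obtain ⟨A⟩ := hM
  let := A.ord
  have := A.directed
  have := A.proj
  exact isFlatMittagLeffler_of_isAdmissiblyIndProjective_general A.mono A.covers
    (fun _ => ⟨inferInstance, .of_projective⟩)
    (fun i j hij => have ⟨_, hr⟩ := A.splits i j hij; .of_comp_eq_id (LinearMap.ext hr))
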